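/- Minkowski sum lattice point surjectivity for compatible polygons: if A is a 2-dimensional smooth lattice polygon and B is a lattice polygon whose normal fan is refined by that of A, then (A + B) ∩ ℤ² = (A ∩ ℤ²) + (B ∩ ℤ²). -/

import Mathlib

open scoped Pointwise

def IsLatticePt {d : ℕ} (x : Fin d → ℝ) : Prop := ∀ i, ∃ z : ℤ, x i = (z : ℝ)

def IsLatticePolytope {d : ℕ} (P : Set (Fin d → ℝ)) : Prop :=
  ∃ V : Finset (Fin d → ℝ), V.Nonempty ∧ (∀ v ∈ V, IsLatticePt v) ∧ P = convexHull ℝ ↑V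

def IsNormalPolytope {d : ℕ} (P : Set (Fin d → ℝ)) : Prop :=
  ∀ n : ℕ, 1 ≤ n → ∀ x ∈ (n : ℝ) • P, IsLatticePt x →
    ∃ f : Fin n → (Fin d → ℝ), (∀ i, f i ∈ P ∧ IsLatticePt (f i)) ∧ x = ∑ i, f i

def P1 : Set (Fin 3 → ℝ) := convexHull ℝ {![0,0,0], ![1,0,0], ![0,1,0], ![0,0,1]}

def dot2 (x y : Fin 2 → ℝ) : ℝ := ∑ i, x i * y i

def normalCone (P : Set (Fin 2 → ℝ)) (u : Fin 2 → ℝ) : Set (Fin 2 → ℝ) :=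
  {y | ∀ x ∈ P, dot2 x y ≤ dot2 u y}

/-- The normal fan of `A` refines the normal fan of `B`: every normal cone of `A`
is contained in some normal cone of `B`. -/
def FanRefines (A B : Set (Fin 2 → ℝ)) : Prop :=
  ∀ u ∈ A, ∃ v ∈ B, normalCone A u ⊆ normalCone B v

/-- At every vertex the primitive edge directions form a ℤ-basis of ℤ². -/
def IsSmoothPolygon (F : Set (Fin 2 → ℝ)) : Prop :=
  ∀ u ∈ Set.extremePoints ℝ F, ∃ m₁ m₂ : Fin 2 → ℤ,
    (m₁ 0 * m₂ 1 - m₁ 1 * m₂ 0 = 1 ∨ m₁ 0 * m₂ 1 - m₁ 1 * m₂ 0 = -1) ∧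
    {y : Fin 2 → ℝ | ∃ t : ℝ, ∃ x ∈ F, 0 ≤ t ∧ y = t • (x - u)} =
      {y : Fin 2 → ℝ | ∃ a b : ℝ, 0 ≤ a ∧ 0 ≤ b ∧
        y = a • (fun i => (m₁ i : ℝ)) + b • (fun i => (m₂ i : ℝ))}

def emb (v : Fin 2 → ℝ) (t : ℝ) : Fin 3 → ℝ := ![v 0, v 1, t]

def cayley (F G : Set (Fin 2 → ℝ)) : Set (Fin 3 → ℝ) :=
  convexHull ℝ ((fun v => emb v 0) '' F ∪ (fun v => emb v 1) '' G)

/-!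
A lattice point `x` of `A + B` splits as soon as the polygons `A` and `C := x - B`, which meet,
have a common lattice point. If they had none, Doignon's theorem would provide at most four open
half-planes, each containing `A` or `C`, without a common lattice point in the convex hull of
`A ∪ C`. If at most one of them fails to contain `A`, it contains `C`, hence a point of `A`, hence a
vertex of `A`, and this vertex lies in all four.

Otherwise at most two of them contain `A`; they cut out a wedge containing `A` and meeting `C`, and
the others contain `C`. Refinement of normal fans says that every functional maximized over `A` at a
vertex `r` is minimized over `C` at a lattice point `φ r` depending on `r` alone. Rotating a
functional from one normal of the wedge to the other, we find one whose minimum over `C` is attained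
on both sides of the wedge, hence along an edge of `C` that crosses the wedge. The parallel edge of
`A` lies inside the wedge and closer to its apex, so it is shorter than this crossing, and walking
along the edge of `C` in steps of the edge vector of `A` hits a lattice point inside the wedge.
-/

open Set

lemma exists_subset_pair_of_card_le_two {α : Type*} [DecidableEq α] {H : Set α} (hH : H.Nonempty)
    {t : Finset α} (htH : ↑t ⊆ H) (ht : t.card ≤ 2) : ∃ a ∈ H, ∃ b ∈ H, t ⊆ {a, b} := by
  obtain ⟨a₀, ha₀⟩ := hH
  obtain ht | ht | ht : t.card = 0 ∨ t.card = 1 ∨ t.card = 2 := by lia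
  · rw [Finset.card_eq_zero] at ht
    exact ⟨a₀, ha₀, a₀, ha₀, by simp [ht]⟩
  · obtain ⟨a, rfl⟩ := Finset.card_eq_one.1 ht
    exact ⟨a, htH (by simp), a, htH (by simp), by simp⟩
  · obtain ⟨a, b, -, rfl⟩ := Finset.card_eq_two.1 ht
    exact ⟨a, htH (by simp), b, htH (by simp), subset_rfl⟩

namespace IsLatticePt

variable {d : ℕ} {x y : Fin d → ℝ}

lemma add (hx : IsLatticePt x) (hy : IsLatticePt y) : IsLatticePt (x + y) := by
  intro i
  obtain ⟨a, ha⟩ := hx i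
  obtain ⟨b, hb⟩ := hy i
  exact ⟨a + b, by simp [ha, hb]⟩

lemma sub (hx : IsLatticePt x) (hy : IsLatticePt y) : IsLatticePt (x - y) := by
  intro i
  obtain ⟨a, ha⟩ := hx i
  obtain ⟨b, hb⟩ := hy i
  exact ⟨a - b, by simp [ha, hb]⟩

lemma nsmul (n : ℕ) (hx : IsLatticePt x) : IsLatticePt (n • x) := by
  intro i
  obtain ⟨a, ha⟩ := hx i
  exact ⟨n * a, by simp [ha]⟩

lemma exists_eq_intCast (hx : IsLatticePt x) : ∃ z : Fin d → ℤ, x = fun i => (z i : ℝ) := by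
  choose z hz using hx
  exact ⟨z, funext hz⟩

end IsLatticePt

namespace IsLatticePolytope

variable {d : ℕ} {P : Set (Fin d → ℝ)}

lemma convex (hP : IsLatticePolytope P) : Convex ℝ P := by
  obtain ⟨V, -, -, rfl⟩ := hP
  exact convex_convexHull ℝ _

lemma isCompact (hP : IsLatticePolytope P) : IsCompact P := by
  obtain ⟨V, -, -, rfl⟩ := hP
  exact V.finite_toSet.isCompact_convexHull ℝ

end IsLatticePolytope

section Lattice

variable {d : ℕ}

lemma finite_isLatticePt_of_isBounded {K : Set (Fin d → ℝ)} (hK : Bornology.IsBounded K) :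
    {x ∈ K | IsLatticePt x}.Finite := by
  obtain ⟨R, hR⟩ := hK.exists_norm_le
  refine ((finite_Icc (fun _ => -⌈R⌉) (fun _ => ⌈R⌉)).image
    (fun (z : Fin d → ℤ) i => (z i : ℝ))).subset ?_
  rintro x ⟨hxK, hx⟩
  obtain ⟨z, rfl⟩ := hx.exists_eq_intCast
  have hz : ∀ i, |z i| ≤ ⌈R⌉ := fun i => by
    have : |(z i : ℝ)| ≤ ⌈R⌉ := ((norm_le_pi_norm _ i).trans (hR _ hxK)).trans (Int.le_ceil R)
    exact_mod_cast this
  exact ⟨z, ⟨fun i => (abs_le.1 (hz i)).1, fun i => (abs_le.1 (hz i)).2⟩, rfl⟩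

lemma exists_ne_isLatticePt_midpoint {ι : Type*} [Fintype ι] {x : ι → Fin d → ℝ}
    (hx : ∀ i, IsLatticePt (x i)) (hcard : 2 ^ d < Fintype.card ι) :
    ∃ i j, i ≠ j ∧ IsLatticePt (midpoint ℝ (x i) (x j)) := by
  choose z hz using fun i => (hx i).exists_eq_intCast
  obtain ⟨i, j, hij, hpar⟩ := Fintype.exists_ne_map_eq_of_card_lt
    (fun i k => (z i k : ZMod 2)) (by simpa [ZMod.card] using hcard)
  refine ⟨i, j, hij, fun k => ?_⟩
  obtain ⟨a, ha⟩ := (ZMod.intCast_eq_intCast_iff_dvd_sub _ _ 2).1 (congrFun hpar k)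
  have ha' : (z j k : ℝ) - z i k = 2 * a := by exact_mod_cast ha
  refine ⟨z i k + a, ?_⟩
  simp only [midpoint_eq_smul_add, hz, Pi.smul_apply, Pi.add_apply, smul_eq_mul, invOf_eq_inv]
  push_cast
  linarith

end Lattice

section Doignon

/-- A system of strict inequalities `g i x < b i` without a solution in `W`, each proper subsystem
of which has a solution in `W`. -/
structure IsCriticallyInfeasible {α ι : Type*} (W : Set α) (g : ι → α → ℝ) (b : ι → ℝ) :
    Prop where
  exists_le : ∀ x ∈ W, ∃ i, b i ≤ g i x
  exists_forall_ne_lt : ∀ i, ∃ x ∈ W, ∀ j, j ≠ i → g j x < b j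

/-- The inequality `g k x < b k` of the system `g i x < b i` is tight on `W` if some point of `W`
attains equality in it and satisfies all other inequalities of the system. -/
def IsTightAt {α ι : Type*} (W : Set α) (g : ι → α → ℝ) (b : ι → ℝ) (k : ι) : Prop :=
  ∃ x ∈ W, g k x = b k ∧ ∀ j, j ≠ k → g j x < b j

namespace IsCriticallyInfeasible

variable {α ι : Type*} {W : Set α} {g : ι → α → ℝ} {b : ι → ℝ}

lemma exists_isMinOn (hW : W.Finite) (h : IsCriticallyInfeasible W g b) (k : ι) :
    ∃ x ∈ {x ∈ W | ∀ j, j ≠ k → g j x < b j},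
      IsMinOn (g k) {x ∈ W | ∀ j, j ≠ k → g j x < b j} x ∧ b k ≤ g k x := by
  obtain ⟨x, hx, hmin⟩ := exists_min_image {x ∈ W | ∀ j, j ≠ k → g j x < b j} (g k)
    (hW.subset (sep_subset _ _)) (h.exists_forall_ne_lt k)
  obtain ⟨i, hi⟩ := h.exists_le x hx.1
  have hik : i = k := by_contra fun hik => (hx.2 i hik).not_ge hi
  exact ⟨x, hx, hmin, hik ▸ hi⟩

lemma exists_forall_mem_isTightAt (hW : W.Finite) (h : IsCriticallyInfeasible W g b)
    (s : Finset ι) : ∃ b', IsCriticallyInfeasible W g b' ∧ ∀ k ∈ s, IsTightAt W g b' k := by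
  classical
  induction s using Finset.induction_on with
  | empty => exact ⟨b, h, by simp⟩
  | insert k s _ ih =>
    obtain ⟨b', h', hs⟩ := ih
    obtain ⟨x, ⟨hxW, hx⟩, hmin, hkx⟩ := h'.exists_isMinOn hW k
    have hle : b' ≤ Function.update b' k (g k x) := le_update_iff.2 ⟨hkx, fun _ _ => le_rfl⟩
    refine ⟨Function.update b' k (g k x), ⟨fun y hy => ?_, fun i => ?_⟩, fun i hi => ?_⟩
    · by_cases hall : ∀ j, j ≠ k → g j y < b' j
      · exact ⟨k, by simpa using hmin ⟨hy, hall⟩⟩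
      · push Not at hall
        obtain ⟨j, hjk, hj⟩ := hall
        exact ⟨j, by simpa [hjk] using hj⟩
    · obtain ⟨y, hy, hlt⟩ := h'.exists_forall_ne_lt i
      exact ⟨y, hy, fun j hj => (hlt j hj).trans_le (hle j)⟩
    · by_cases hik : i = k
      · subst hik
        exact ⟨x, hxW, by simp, fun j hj => by simpa [hj] using hx j hj⟩
      · obtain ⟨y, hy, hyi, hlt⟩ := hs i (Finset.mem_of_mem_insert_of_ne hi hik)
        exact ⟨y, hy, by simpa [hik] using hyi, fun j hj => (hlt j hj).trans_le (hle j)⟩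

end IsCriticallyInfeasible

variable {d : ℕ} {K : Set (Fin d → ℝ)}

lemma IsCriticallyInfeasible.card_le_two_pow {ι : Type*} [Fintype ι] {f : ι → Fin d → ℝ}
    {b : ι → ℝ} (hK : Convex ℝ K) (hKb : Bornology.IsBounded K)
    (h : IsCriticallyInfeasible {x ∈ K | IsLatticePt x} (fun i x => x ⬝ᵥ f i) b) :
    Fintype.card ι ≤ 2 ^ d := by
  by_contra! hcard
  obtain ⟨b', h', htight⟩ := h.exists_forall_mem_isTightAt
    (finite_isLatticePt_of_isBounded hKb) Finset.univ
  choose x hx heq hlt using fun k => htight k (Finset.mem_univ k)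
  have hle : ∀ k i, x i ⬝ᵥ f k ≤ b' k := fun k i => by
    by_cases hki : k = i
    · exact hki ▸ (heq k).le
    · exact (hlt i k hki).le
  obtain ⟨i, j, hij, hlat⟩ := exists_ne_isLatticePt_midpoint (fun i => (hx i).2) hcard
  obtain ⟨k, hk⟩ := h'.exists_le _ ⟨hK.midpoint_mem (hx i).1 (hx j).1, hlat⟩
  have hmid : midpoint ℝ (x i) (x j) ⬝ᵥ f k = (x i ⬝ᵥ f k + x j ⬝ᵥ f k) / 2 := by
    rw [midpoint_eq_smul_add, smul_dotProduct, add_dotProduct, smul_eq_mul, invOf_eq_inv]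
    ring
  by_cases hki : k = i
  · linarith [hle k i, hlt j k (hki ▸ hij)]
  · linarith [hlt i k hki, hle k j]

/-- **Doignon's theorem** for half-spaces `{x | x ⬝ᵥ p.1 < p.2}`, encoded as pairs `p`: a family
without common lattice point in `K` has a subfamily of at most `2 ^ d` members without one. -/
theorem exists_finset_card_le_two_pow (hK : Convex ℝ K) (hKb : Bornology.IsBounded K)
    {H : Set ((Fin d → ℝ) × ℝ)} (hH : ∀ x ∈ K, IsLatticePt x → ∃ p ∈ H, p.2 ≤ x ⬝ᵥ p.1) :
    ∃ t : Finset ((Fin d → ℝ) × ℝ), ↑t ⊆ H ∧ t.card ≤ 2 ^ d ∧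
      ∀ x ∈ K, IsLatticePt x → ∃ p ∈ t, p.2 ≤ x ⬝ᵥ p.1 := by
  classical
  choose! p hpH hp using hH
  let s := (finite_isLatticePt_of_isBounded hKb).toFinset.image p
  have hs : ∀ x ∈ K, IsLatticePt x → ∃ p ∈ s, p.2 ≤ x ⬝ᵥ p.1 := fun x hxK hx =>
    ⟨p x, Finset.mem_image_of_mem p (by simp [hxK, hx]), hp x hxK hx⟩
  obtain ⟨t, hts, ht⟩ := exists_minimal_le_of_wellFoundedLT
    (fun t : Finset _ => ∀ x ∈ K, IsLatticePt x → ∃ p ∈ t, p.2 ≤ x ⬝ᵥ p.1) s hs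
  refine ⟨t, fun q hq => ?_, ?_, ht.prop⟩
  · obtain ⟨x, hx, rfl⟩ := Finset.mem_image.1 (hts hq)
    obtain ⟨hxK, hx⟩ := (finite_isLatticePt_of_isBounded hKb).mem_toFinset.1 hx
    exact hpH x hxK hx
  · suffices h : IsCriticallyInfeasible {x ∈ K | IsLatticePt x}
        (fun (q : t) x => x ⬝ᵥ q.1.1) (fun q => q.1.2) by
      simpa using h.card_le_two_pow hK hKb
    refine ⟨fun x ⟨hxK, hx⟩ => ?_, fun q => ?_⟩
    · obtain ⟨q, hq, hle⟩ := ht.prop x hxK hx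
      exact ⟨⟨q, hq⟩, hle⟩
    · have hdrop := ht.not_prop_of_lt (Finset.erase_ssubset q.2)
      push Not at hdrop
      obtain ⟨x, hxK, hx, hlt⟩ := hdrop
      exact ⟨x, ⟨hxK, hx⟩, fun j hj =>
        hlt j (Finset.mem_erase.2 ⟨fun h => hj (Subtype.ext h), j.2⟩)⟩

end Doignon

section HalfSpaces

variable {d : ℕ} {K : Set (Fin d → ℝ)}

/-- The open half-spaces `{x | x ⬝ᵥ p.1 < p.2}` containing `K`, encoded as pairs `p`. The normal
vector may be `0`, in which case the half-space is the whole space. -/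
def openHalfSpaces (K : Set (Fin d → ℝ)) : Set ((Fin d → ℝ) × ℝ) :=
  {p | ∀ x ∈ K, x ⬝ᵥ p.1 < p.2}

lemma exists_mem_openHalfSpaces_le (hK : Convex ℝ K) (hKc : IsClosed K) {x : Fin d → ℝ}
    (hx : x ∉ K) : ∃ p ∈ openHalfSpaces K, p.2 ≤ x ⬝ᵥ p.1 := by
  obtain ⟨φ, u, hlt, hu⟩ := geometric_hahn_banach_closed_point hK hKc hx
  obtain ⟨c, hc⟩ := (dotProductEquiv ℝ (Fin d)).surjective φ.toLinearMap
  have hφ : ∀ y, y ⬝ᵥ c = φ y := fun y => by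
    rw [dotProduct_comm]
    exact LinearMap.congr_fun hc y
  exact ⟨(c, u), fun y hy => (hφ y).trans_lt (hlt y hy), hu.le.trans (hφ x).ge⟩

lemma exists_dotProduct_le_of_mem_convexHull {V : Set (Fin d → ℝ)} {y : Fin d → ℝ}
    (hy : y ∈ convexHull ℝ V) (N : Fin d → ℝ) : ∃ v ∈ V, v ⬝ᵥ N ≤ y ⬝ᵥ N :=
  (((dotProductBilin ℝ ℝ).flip N).concaveOn convex_univ).exists_le_of_mem_convexHull
    (subset_univ V) hy

end HalfSpaces

section NormalCone

variable {P : Set (Fin 2 → ℝ)} {u N : Fin 2 → ℝ}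

lemma mem_normalCone : N ∈ normalCone P u ↔ ∀ x ∈ P, x ⬝ᵥ N ≤ u ⬝ᵥ N := Iff.rfl

lemma isClosed_normalCone : IsClosed (normalCone P u) := by
  have : normalCone P u = ⋂ x ∈ P, {N | x ⬝ᵥ N ≤ u ⬝ᵥ N} := by
    ext N
    simp [mem_normalCone]
  rw [this]
  exact isClosed_biInter fun x _ => isClosed_le (by fun_prop) (by fun_prop)

lemma normalCone_convexHull : normalCone (convexHull ℝ P) u = normalCone P u := by
  ext N
  refine ⟨fun h x hx => h x (subset_convexHull ℝ P hx), fun h x hx => ?_⟩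
  obtain ⟨v, hv, hle⟩ := exists_dotProduct_le_of_mem_convexHull hx (-N)
  simp only [dotProduct_neg, neg_le_neg_iff] at hle
  exact hle.trans (h v hv)

lemma normalCone_subset_of_mem_openSegment {x y : Fin 2 → ℝ} (hy : y ∈ P)
    (hu : u ∈ openSegment ℝ x y) : normalCone P u ⊆ normalCone P x := by
  obtain ⟨s, t, hs, ht, hst, rfl⟩ := hu
  intro N hN
  have hyN := mem_normalCone.1 hN y hy
  suffices h : (s • x + t • y) ⬝ᵥ N ≤ x ⬝ᵥ N from
    mem_normalCone.2 fun z hz => (mem_normalCone.1 hN z hz).trans h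
  simp only [add_dotProduct, smul_dotProduct, smul_eq_mul] at hyN ⊢
  obtain rfl : s = 1 - t := by linarith
  have hle : y ⬝ᵥ N ≤ x ⬝ᵥ N := le_of_mul_le_mul_left (by linarith) hs
  linarith [mul_le_mul_of_nonneg_left hle ht.le]

lemma exists_normalCone_subset {V : Set (Fin 2 → ℝ)} (hu : u ∈ convexHull ℝ V) :
    ∃ v ∈ V, normalCone (convexHull ℝ V) u ⊆ normalCone (convexHull ℝ V) v := by
  set P := convexHull ℝ V
  have hconv : Convex ℝ {u ∈ P | ∃ v ∈ V, normalCone P u ⊆ normalCone P v} := by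
    rw [convex_iff_openSegment_subset]
    rintro x ⟨hx, v, hv, hxv⟩ y ⟨hy, -⟩ z hz
    exact ⟨(convex_convexHull ℝ V).openSegment_subset hx hy hz, v, hv,
      (normalCone_subset_of_mem_openSegment hy hz).trans hxv⟩
  have hV : V ⊆ {u ∈ P | ∃ v ∈ V, normalCone P u ⊆ normalCone P v} := fun v hv =>
    ⟨subset_convexHull ℝ V hv, v, hv, subset_rfl⟩
  exact (convexHull_min hV hconv hu).2

lemma exists_mem_normalCone {V : Finset (Fin 2 → ℝ)} (hV : V.Nonempty) (N : Fin 2 → ℝ) :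
    ∃ r ∈ V, N ∈ normalCone (V : Set (Fin 2 → ℝ)) r :=
  V.exists_max_image (· ⬝ᵥ N) hV

lemma isClosed_setOf_exists_mem_normalCone (V : Finset (Fin 2 → ℝ)) (p : (Fin 2 → ℝ) → Prop) :
    IsClosed {N | ∃ r ∈ V, p r ∧ N ∈ normalCone (V : Set (Fin 2 → ℝ)) r} := by
  have : {N | ∃ r ∈ V, p r ∧ N ∈ normalCone (V : Set (Fin 2 → ℝ)) r} =
      ⋃ r ∈ {r | r ∈ V ∧ p r}, normalCone (V : Set (Fin 2 → ℝ)) r := by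
    ext N
    simp [and_assoc]
  rw [this]
  exact (V.finite_toSet.subset fun _ h => h.1).isClosed_biUnion fun _ _ => isClosed_normalCone

end NormalCone

/-- `φ` maps every `r ∈ V` to a lattice point of `C` that minimizes over `C` all functionals
maximized over `V` at `r`. Such a map exists when the normal fan of the convex hull of `V` refines
that of `-C` and `C` is a lattice polygon. -/
structure IsOppositeVertexMap (V C : Set (Fin 2 → ℝ)) (φ : (Fin 2 → ℝ) → Fin 2 → ℝ) : Prop where
  mem : ∀ r ∈ V, φ r ∈ C
  isLatticePt : ∀ r ∈ V, IsLatticePt (φ r)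
  dotProduct_le : ∀ r ∈ V, ∀ N ∈ normalCone V r, ∀ x ∈ C, φ r ⬝ᵥ N ≤ x ⬝ᵥ N

lemma FanRefines.exists_isOppositeVertexMap {V B : Set (Fin 2 → ℝ)} {x : Fin 2 → ℝ}
    (href : FanRefines (convexHull ℝ V) B) (hB : IsLatticePolytope B) (hx : IsLatticePt x) :
    ∃ φ, IsOppositeVertexMap V ({x} - B) φ := by
  obtain ⟨VB, -, hVB, rfl⟩ := hB
  have hvertex : ∀ r ∈ V, ∃ w ∈ VB, normalCone V r ⊆ normalCone (convexHull ℝ VB) w := by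
    intro r hr
    obtain ⟨v, hv, hrv⟩ := href r (subset_convexHull ℝ V hr)
    obtain ⟨w, hw, hvw⟩ := exists_normalCone_subset hv
    exact ⟨w, hw, normalCone_convexHull.symm.subset.trans (hrv.trans hvw)⟩
  choose! w hw hcone using hvertex
  refine ⟨fun r => x - w r, fun r hr => ?_, fun r hr => hx.sub (hVB _ (hw r hr)), ?_⟩
  · exact sub_mem_sub rfl (subset_convexHull ℝ _ (hw r hr))
  · rintro r hr N hN _ ⟨_, rfl, b, hb, rfl⟩
    simp only [sub_dotProduct]
    exact sub_le_sub_left (mem_normalCone.1 (hcone r hr hN) b hb) _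

section Wedge

/-- The nonzero functionals that are positive wherever both `c` and `d` are. They are the
nonzero nonnegative combinations of `c` and `d`, except that all nonzero functionals qualify when no
`u` is positive on both, as for opposite `c` and `d`. -/
def functionalsBetween {n : ℕ} (c d : Fin n → ℝ) : Set (Fin n → ℝ) :=
  {N | N ≠ 0 ∧ ∀ u, 0 < u ⬝ᵥ c → 0 < u ⬝ᵥ d → 0 < u ⬝ᵥ N}

lemma isPreconnected_functionalsBetween {n : ℕ} (hn : 1 < n) (c d : Fin n → ℝ) :
    IsPreconnected (functionalsBetween c d) := by
  by_cases h : ∃ u, 0 < u ⬝ᵥ c ∧ 0 < u ⬝ᵥ d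
  · obtain ⟨u₀, hc, hd⟩ := h
    have heq : functionalsBetween c d = {N | ∀ u, 0 < u ⬝ᵥ c → 0 < u ⬝ᵥ d → 0 < u ⬝ᵥ N} := by
      refine subset_antisymm (fun N hN => hN.2) fun N hN => ⟨?_, hN⟩
      rintro rfl
      simpa using hN u₀ hc hd
    rw [heq]
    refine Convex.isPreconnected fun N hN N' hN' s t hs ht hst u huc hud => ?_
    have hmem : s • (u ⬝ᵥ N) + t • (u ⬝ᵥ N') ∈ Ioi (0 : ℝ) :=
      convex_Ioi (0 : ℝ) (hN u huc hud) (hN' u huc hud) hs ht hst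
    simpa only [dotProduct_add, dotProduct_smul, mem_Ioi] using hmem
  · have heq : functionalsBetween c d = {0}ᶜ :=
      subset_antisymm (fun N hN => hN.1) fun N hN => ⟨hN, fun u hc hd => (h ⟨u, hc, hd⟩).elim⟩
    rw [heq]
    exact (isConnected_compl_singleton_of_one_lt_rank (by simpa using hn) 0).isPreconnected

/-- Translating `q` repeatedly by `r' - r`, the first point that enters `{x | x ⬝ᵥ d < β}` has not
yet left `{x | x ⬝ᵥ c < α}`: otherwise it would exceed `r'` in both directions `c` and `d`, hence
also in direction `N`. -/
lemma exists_isLatticePt_lt_of_sub_eq_smul {n : ℕ} {c d : Fin n → ℝ} {α β : ℝ}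
    {C : Set (Fin n → ℝ)} (hC : Convex ℝ C) {q q' r r' N : Fin n → ℝ} (hqC : q ∈ C)
    (hqC' : q' ∈ C) (hq : IsLatticePt q) (hr : IsLatticePt r) (hr' : IsLatticePt r')
    (hqc : q ⬝ᵥ c < α) (hqc' : α ≤ q' ⬝ᵥ c) (hqd : β ≤ q ⬝ᵥ d) (hqd' : q' ⬝ᵥ d < β)
    (hrd : r ⬝ᵥ d < β) (hrc' : r' ⬝ᵥ c < α) (hN : N ∈ functionalsBetween c d)
    (hrN : r ⬝ᵥ N = r' ⬝ᵥ N) (hqr : q ⬝ᵥ N ≤ r' ⬝ᵥ N) {τ : ℝ} (hτ : 0 < τ)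
    (hsmul : r' - r = τ • (q' - q)) :
    ∃ z ∈ C, IsLatticePt z ∧ z ⬝ᵥ c < α ∧ z ⬝ᵥ d < β := by
  have hstep : ∀ m, r' ⬝ᵥ m - r ⬝ᵥ m = τ * (q' ⬝ᵥ m - q ⬝ᵥ m) := fun m => by
    simpa only [sub_dotProduct, smul_dotProduct, smul_eq_mul] using congrArg (· ⬝ᵥ m) hsmul
  have hδ : 0 < r ⬝ᵥ d - r' ⬝ᵥ d := by
    have := mul_pos hτ (sub_pos.2 (hqd'.trans_le hqd))
    linarith [hstep d]
  let l := ⌊(q ⬝ᵥ d - β) / (r ⬝ᵥ d - r' ⬝ᵥ d)⌋₊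
  have hl : l * (r ⬝ᵥ d - r' ⬝ᵥ d) ≤ q ⬝ᵥ d - β :=
    (le_div_iff₀ hδ).1 (Nat.floor_le (div_nonneg (sub_nonneg.2 hqd) hδ.le))
  have hl' : q ⬝ᵥ d - β < (l + 1) * (r ⬝ᵥ d - r' ⬝ᵥ d) :=
    (div_lt_iff₀ hδ).1 (Nat.lt_floor_add_one _)
  let z := q + (l + 1) • (r' - r)
  have hz : ∀ m, z ⬝ᵥ m = q ⬝ᵥ m + (l + 1) * (r' ⬝ᵥ m - r ⬝ᵥ m) := fun m => by
    simp only [z, add_dotProduct, ← Nat.cast_smul_eq_nsmul ℝ, smul_dotProduct, sub_dotProduct,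
      smul_eq_mul, Nat.cast_add, Nat.cast_one]
  have hzc : z ⬝ᵥ c < α := by
    by_contra! hzc
    have hzN : 0 < (z - r') ⬝ᵥ N := by
      refine hN.2 _ ?_ ?_ <;> rw [sub_dotProduct]
      · linarith
      · linarith [hz d]
    rw [sub_dotProduct, hz, hrN] at hzN
    linarith
  refine ⟨z, ?_, hq.add ((hr'.sub hr).nsmul (l + 1)), hzc, by linarith [hz d]⟩
  have hlτ : (l + 1) * τ < 1 := by
    have : (l + 1) * τ * (q' ⬝ᵥ c - q ⬝ᵥ c) < 1 * (q' ⬝ᵥ c - q ⬝ᵥ c) := by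
      rw [mul_assoc, ← hstep]
      linarith [hz c]
    exact lt_of_mul_lt_mul_right this (by linarith)
  have hzq : z = q + ((l + 1) * τ) • (q' - q) := by
    simp only [z, hsmul, ← Nat.cast_smul_eq_nsmul ℝ, smul_smul, Nat.cast_add, Nat.cast_one]
  rw [hzq]
  exact hC.add_smul_sub_mem hqC hqC' ⟨by positivity, hlτ.le⟩

lemma exists_eq_smul_of_dotProduct_eq_zero {N u v : Fin 2 → ℝ} (hN : N ≠ 0) (hu : u ⬝ᵥ N = 0)
    (hv : v ⬝ᵥ N = 0) (hv₀ : v ≠ 0) : ∃ τ : ℝ, u = τ • v := by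
  simp only [dotProduct, Fin.sum_univ_two] at hu hv
  have hdet : u 0 * v 1 - u 1 * v 0 = 0 := by
    by_contra hdet
    have h₀ : (u 0 * v 1 - u 1 * v 0) * N 0 = 0 := by linear_combination v 1 * hu - u 1 * hv
    have h₁ : (u 0 * v 1 - u 1 * v 0) * N 1 = 0 := by linear_combination u 0 * hv - v 0 * hu
    exact hN (funext (Fin.forall_fin_two.2
      ⟨(mul_eq_zero.1 h₀).resolve_left hdet, (mul_eq_zero.1 h₁).resolve_left hdet⟩))
  have hvv : v ⬝ᵥ v ≠ 0 := dotProduct_self_eq_zero.not.2 hv₀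
  have hcoord : ∀ i, u i * v ⬝ᵥ v = u ⬝ᵥ v * v i := by
    simp only [dotProduct, Fin.sum_univ_two]
    refine Fin.forall_fin_two.2 ⟨?_, ?_⟩
    · linear_combination v 1 * hdet
    · linear_combination -v 0 * hdet
  refine ⟨(u ⬝ᵥ v) / (v ⬝ᵥ v), funext fun i => ?_⟩
  rw [Pi.smul_apply, smul_eq_mul, div_mul_eq_mul_div, eq_div_iff hvv]
  exact hcoord i

variable {V : Finset (Fin 2 → ℝ)} {C : Set (Fin 2 → ℝ)} {φ : (Fin 2 → ℝ) → Fin 2 → ℝ}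
  {c d y : Fin 2 → ℝ} {α β : ℝ}

namespace IsOppositeVertexMap

lemma ne_zero_and_le_dotProduct (hφ : IsOppositeVertexMap V C φ) (hyC : y ∈ C)
    (hyc : y ⬝ᵥ c < α) (hyd : y ⬝ᵥ d < β)
    (hC : ∀ z ∈ C, IsLatticePt z → α ≤ z ⬝ᵥ c ∨ β ≤ z ⬝ᵥ d) {r : Fin 2 → ℝ} (hr : r ∈ V)
    (hrc : c ∈ normalCone V r) : d ≠ 0 ∧ β ≤ φ r ⬝ᵥ d := by
  have hlt : φ r ⬝ᵥ c < α := (hφ.dotProduct_le r hr c hrc y hyC).trans_lt hyc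
  have hle : β ≤ φ r ⬝ᵥ d :=
    (hC _ (hφ.mem r hr) (hφ.isLatticePt r hr)).resolve_left hlt.not_ge
  refine ⟨?_, hle⟩
  rintro rfl
  simp only [dotProduct_zero] at hle hyd
  exact hyd.not_ge hle

/-- Rotate a functional from `c` to `d`. The minimum over `C` is attained beyond `β` in direction
`d` at the start and beyond `α` in direction `c` at the end; connectedness gives a functional for
which both happen. -/
lemma exists_mem_normalCone_inter (hφ : IsOppositeVertexMap V C φ) (hV : V.Nonempty)
    (hyC : y ∈ C) (hyc : y ⬝ᵥ c < α) (hyd : y ⬝ᵥ d < β)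
    (hC : ∀ z ∈ C, IsLatticePt z → α ≤ z ⬝ᵥ c ∨ β ≤ z ⬝ᵥ d) :
    ∃ N ∈ functionalsBetween c d, ∃ r ∈ V, ∃ r' ∈ V, N ∈ normalCone V r ∧ N ∈ normalCone V r' ∧
      β ≤ φ r ⬝ᵥ d ∧ α ≤ φ r' ⬝ᵥ c := by
  have hcover : functionalsBetween c d ⊆
      {N | ∃ r ∈ V, β ≤ φ r ⬝ᵥ d ∧ N ∈ normalCone V r} ∪
        {N | ∃ r ∈ V, α ≤ φ r ⬝ᵥ c ∧ N ∈ normalCone V r} := by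
    intro N _
    obtain ⟨r, hr, hNr⟩ := exists_mem_normalCone hV N
    exact (hC _ (hφ.mem r hr) (hφ.isLatticePt r hr)).symm.imp
      (fun h => ⟨r, hr, h, hNr⟩) (fun h => ⟨r, hr, h, hNr⟩)
  obtain ⟨r₀, hr₀, hcr₀⟩ := exists_mem_normalCone hV c
  obtain ⟨r₁, hr₁, hdr₁⟩ := exists_mem_normalCone hV d
  obtain ⟨hd, hle₀⟩ := hφ.ne_zero_and_le_dotProduct hyC hyc hyd hC hr₀ hcr₀
  obtain ⟨hc, hle₁⟩ := hφ.ne_zero_and_le_dotProduct hyC hyd hyc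
    (fun z hz hz' => (hC z hz hz').symm) hr₁ hdr₁
  obtain ⟨N, hN, ⟨r, hr, hrd, hNr⟩, r', hr', hrc', hNr'⟩ := isPreconnected_closed_iff.1
    (isPreconnected_functionalsBetween one_lt_two c d) _ _
    (isClosed_setOf_exists_mem_normalCone V _) (isClosed_setOf_exists_mem_normalCone V _) hcover
    ⟨c, ⟨hc, fun u huc _ => huc⟩, r₀, hr₀, hle₀, hcr₀⟩
    ⟨d, ⟨hd, fun u _ hud => hud⟩, r₁, hr₁, hle₁, hdr₁⟩
  exact ⟨N, hN, r, hr, r', hr', hNr, hNr', hrd, hrc'⟩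

lemma exists_sub_eq_smul_sub (hφ : IsOppositeVertexMap V C φ)
    (hyV : y ∈ convexHull ℝ (V : Set (Fin 2 → ℝ))) (hyC : y ∈ C)
    (hyc : y ⬝ᵥ c < α) (hyd : y ⬝ᵥ d < β)
    (hC : ∀ z ∈ C, IsLatticePt z → α ≤ z ⬝ᵥ c ∨ β ≤ z ⬝ᵥ d) :
    ∃ N ∈ functionalsBetween c d, ∃ r ∈ V, ∃ r' ∈ V,
      r ⬝ᵥ N = r' ⬝ᵥ N ∧ φ r ⬝ᵥ N ≤ r ⬝ᵥ N ∧ φ r ⬝ᵥ c < α ∧ α ≤ φ r' ⬝ᵥ c ∧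
      β ≤ φ r ⬝ᵥ d ∧ φ r' ⬝ᵥ d < β ∧ ∃ τ : ℝ, τ ≠ 0 ∧ r' - r = τ • (φ r' - φ r) := by
  obtain ⟨N, hN, r, hr, r', hr', hNr, hNr', hrd, hrc'⟩ := hφ.exists_mem_normalCone_inter
    (convexHull_nonempty_iff.1 ⟨y, hyV⟩) hyC hyc hyd hC
  have hrN : r ⬝ᵥ N = r' ⬝ᵥ N := (hNr' r hr).antisymm (hNr r' hr')
  have hφN : φ r ⬝ᵥ N = φ r' ⬝ᵥ N :=
    (hφ.dotProduct_le r hr N hNr _ (hφ.mem r' hr')).antisymm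
      (hφ.dotProduct_le r' hr' N hNr' _ (hφ.mem r hr))
  have hφy : φ r ⬝ᵥ N ≤ y ⬝ᵥ N := hφ.dotProduct_le r hr N hNr y hyC
  have hyr : y ⬝ᵥ N ≤ r ⬝ᵥ N := normalCone_convexHull.symm.subset hNr y hyV
  have hlt : ∀ q, q ⬝ᵥ N = φ r ⬝ᵥ N → α ≤ q ⬝ᵥ c → q ⬝ᵥ d < β := by
    intro q hq hqc
    by_contra! hqd
    have hyq : 0 < (q - y) ⬝ᵥ N := hN.2 _
      (by rw [sub_dotProduct]; linarith) (by rw [sub_dotProduct]; linarith)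
    rw [sub_dotProduct] at hyq
    linarith
  have hrc : φ r ⬝ᵥ c < α := lt_of_not_ge fun h => (hlt _ rfl h).not_ge hrd
  have hrd' : φ r' ⬝ᵥ d < β := hlt _ hφN.symm hrc'
  have hne : φ r' ≠ φ r := fun h => (h ▸ hrd').not_ge hrd
  obtain ⟨τ, hτ⟩ := exists_eq_smul_of_dotProduct_eq_zero hN.1
    (show (r' - r) ⬝ᵥ N = 0 by rw [sub_dotProduct, hrN, sub_self])
    (show (φ r' - φ r) ⬝ᵥ N = 0 by rw [sub_dotProduct, hφN, sub_self]) (sub_ne_zero.2 hne)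
  refine ⟨N, hN, r, hr, r', hr', hrN, hφy.trans hyr, hrc, hrc', hrd, hrd', τ, ?_, hτ⟩
  rintro rfl
  rw [zero_smul, sub_eq_zero] at hτ
  exact hne (congrArg φ hτ)

lemma exists_isLatticePt_lt (hφ : IsOppositeVertexMap V C φ) (hV : ∀ r ∈ V, IsLatticePt r)
    (hC : Convex ℝ C) (hyV : y ∈ convexHull ℝ (V : Set (Fin 2 → ℝ))) (hyC : y ∈ C)
    (hc : (c, α) ∈ openHalfSpaces (convexHull ℝ (V : Set (Fin 2 → ℝ))))
    (hd : (d, β) ∈ openHalfSpaces (convexHull ℝ (V : Set (Fin 2 → ℝ)))) :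
    ∃ z ∈ C, IsLatticePt z ∧ z ⬝ᵥ c < α ∧ z ⬝ᵥ d < β := by
  by_contra! hno
  obtain ⟨N, hN, r, hr, r', hr', hrN, hφr, hrc, hrc', hrd, hrd', τ, hτ₀, hτ⟩ :=
    hφ.exists_sub_eq_smul_sub hyV hyC (hc y hyV) (hd y hyV)
      fun z hz hz' => (le_or_gt α (z ⬝ᵥ c)).imp_right (hno z hz hz')
  have hVc : ∀ s ∈ V, s ⬝ᵥ c < α := fun s hs => hc s (subset_convexHull ℝ _ hs)
  have hVd : ∀ s ∈ V, s ⬝ᵥ d < β := fun s hs => hd s (subset_convexHull ℝ _ hs)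
  have hwalk : ∀ s ∈ V, ∀ s' ∈ V, s ⬝ᵥ N = s' ⬝ᵥ N → φ r ⬝ᵥ N ≤ s' ⬝ᵥ N → ∀ σ : ℝ, 0 < σ →
      s' - s ≠ σ • (φ r' - φ r) := by
    intro s hs s' hs' hsN hφs σ hσ hsmul
    obtain ⟨z, hz, hzlat, hzc, hzd⟩ := exists_isLatticePt_lt_of_sub_eq_smul hC (hφ.mem r hr)
      (hφ.mem r' hr') (hφ.isLatticePt r hr) (hV s hs) (hV s' hs') hrc hrc' hrd hrd' (hVd s hs)
      (hVc s' hs') hN hsN hφs hσ hsmul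
    exact (hno z hz hzlat hzc).not_gt hzd
  rcases hτ₀.lt_or_gt with hneg | hpos
  · exact hwalk r' hr' r hr hrN.symm hφr (-τ) (neg_pos.2 hneg) (by rw [neg_smul, ← hτ, neg_sub])
  · exact hwalk r hr r' hr' hrN (hφr.trans hrN.le) τ hpos hτ

lemma exists_isLatticePt_forall_lt (hφ : IsOppositeVertexMap V C φ)
    (hV : ∀ r ∈ V, IsLatticePt r) (hC : Convex ℝ C)
    (hVC : (convexHull ℝ (V : Set (Fin 2 → ℝ)) ∩ C).Nonempty)
    {t : Finset ((Fin 2 → ℝ) × ℝ)} (ht : t.card ≤ 4)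
    (htVC : ∀ p ∈ t, p ∈ openHalfSpaces (convexHull ℝ (V : Set (Fin 2 → ℝ))) ∨
      p ∈ openHalfSpaces C) :
    ∃ z ∈ convexHull ℝ (V : Set (Fin 2 → ℝ)) ∪ C, IsLatticePt z ∧ ∀ p ∈ t, z ⬝ᵥ p.1 < p.2 := by
  classical
  obtain ⟨y, hyV, hyC⟩ := hVC
  set A := convexHull ℝ (V : Set (Fin 2 → ℝ))
  let tA := {p ∈ t | p ∈ openHalfSpaces A}
  let tC := {p ∈ t | p ∉ openHalfSpaces A}
  have hcard : tA.card + tC.card ≤ 4 := (t.card_filter_add_card_filter_not _).trans_le ht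
  have hsplit : ∀ p ∈ t, p ∈ tA ∨ p ∈ tC ∧ p ∈ openHalfSpaces C := fun p hp => by
    by_cases hpA : p ∈ openHalfSpaces A
    · exact .inl (Finset.mem_filter.2 ⟨hp, hpA⟩)
    · exact .inr ⟨Finset.mem_filter.2 ⟨hp, hpA⟩, (htVC p hp).resolve_left hpA⟩
  have htA : (tA : Set _) ⊆ openHalfSpaces A := fun p hp => (Finset.mem_filter.1 hp).2
  obtain hle | hle : tC.card ≤ 1 ∨ tA.card ≤ 2 := by lia
  · obtain ⟨p₀, hp₀⟩ := Finset.card_le_one_iff_subset_singleton.1 hle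
    obtain ⟨v, hv, hvy⟩ := exists_dotProduct_le_of_mem_convexHull hyV p₀.1
    refine ⟨v, .inl (subset_convexHull ℝ _ hv), hV v hv, fun p hp => ?_⟩
    rcases hsplit p hp with hpA | ⟨hpC, hp⟩
    · exact htA hpA v (subset_convexHull ℝ _ hv)
    · obtain rfl := Finset.mem_singleton.1 (hp₀ hpC)
      exact hvy.trans_lt (hp y hyC)
  · obtain ⟨a, ha, b, hb, htab⟩ := exists_subset_pair_of_card_le_two
      (H := openHalfSpaces A) ⟨(0, 1), by simp [openHalfSpaces]⟩ htA hle
    obtain ⟨z, hz, hzlat, hza, hzb⟩ := hφ.exists_isLatticePt_lt hV hC hyV hyC ha hb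
    refine ⟨z, .inr hz, hzlat, fun p hp => ?_⟩
    rcases hsplit p hp with hpA | ⟨-, hpC⟩
    · rcases Finset.mem_insert.1 (htab hpA) with rfl | hpb
      · exact hza
      · obtain rfl := Finset.mem_singleton.1 hpb
        exact hzb
    · exact hpC z hz

theorem exists_isLatticePt_mem_inter (hφ : IsOppositeVertexMap V C φ)
    (hV : ∀ r ∈ V, IsLatticePt r) (hC : Convex ℝ C) (hCc : IsCompact C)
    (hVC : (convexHull ℝ (V : Set (Fin 2 → ℝ)) ∩ C).Nonempty) :
    ∃ z ∈ convexHull ℝ (V : Set (Fin 2 → ℝ)) ∩ C, IsLatticePt z := by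
  by_contra! hno
  set A := convexHull ℝ (V : Set (Fin 2 → ℝ))
  have hAc : IsCompact A := V.finite_toSet.isCompact_convexHull ℝ
  have hviolated : ∀ x, IsLatticePt x → ∃ p ∈ openHalfSpaces A ∪ openHalfSpaces C,
      p.2 ≤ x ⬝ᵥ p.1 := by
    intro x hx
    by_cases hxA : x ∈ A
    · obtain ⟨p, hp, hle⟩ := exists_mem_openHalfSpaces_le hC hCc.isClosed
        fun hxC => hno x ⟨hxA, hxC⟩ hx
      exact ⟨p, .inr hp, hle⟩
    · obtain ⟨p, hp, hle⟩ := exists_mem_openHalfSpaces_le (convex_convexHull ℝ _) hAc.isClosed hxA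
      exact ⟨p, .inl hp, hle⟩
  obtain ⟨t, ht, hcard, hinf⟩ := exists_finset_card_le_two_pow (convex_convexHull ℝ (A ∪ C))
    (isBounded_convexHull.2 (hAc.isBounded.union hCc.isBounded)) fun x _ hx => hviolated x hx
  obtain ⟨z, hz, hzlat, hlt⟩ := hφ.exists_isLatticePt_forall_lt hV hC hVC hcard fun p hp => ht hp
  obtain ⟨p, hp, hle⟩ := hinf z (subset_convexHull ℝ _ hz) hzlat
  exact (hlt p hp).not_ge hle

end IsOppositeVertexMap

end Wedge

theorem stmt12_general (A B : Set (Fin 2 → ℝ)) (hA : IsLatticePolytope A)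
    (hB : IsLatticePolytope B) (href : FanRefines A B) :
    {x : Fin 2 → ℝ | x ∈ A + B ∧ IsLatticePt x} =
      {x : Fin 2 → ℝ | ∃ a b : Fin 2 → ℝ,
        a ∈ A ∧ IsLatticePt a ∧ b ∈ B ∧ IsLatticePt b ∧ x = a + b} := by
  ext x
  constructor
  · rintro ⟨⟨a, ha, b, hb, rfl⟩, hx⟩
    obtain ⟨V, -, hV, rfl⟩ := hA
    obtain ⟨φ, hφ⟩ := href.exists_isOppositeVertexMap hB hx
    have hcompact : IsCompact ({a + b} - B) := by
      rw [sub_eq_add_neg]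
      exact isCompact_singleton.add hB.isCompact.neg
    obtain ⟨z, ⟨hzA, _, rfl, b', hb', rfl⟩, hz⟩ := hφ.exists_isLatticePt_mem_inter hV
      ((convex_singleton _).sub hB.convex) hcompact
      ⟨a, ha, a + b, rfl, b, hb, add_sub_cancel_right a b⟩
    exact ⟨a + b - b', b', hzA, hz, hb', by simpa using hx.sub hz, by simp⟩
  · rintro ⟨a, b, ha, halat, hb, hblat, rfl⟩
    exact ⟨add_mem_add ha hb, halat.add hblat⟩

/-- Fakhruddin's theorem in dimension 2: lattice points of a Minkowski sum of an
ample polygon and a nef polygon split. -/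
theorem stmt12 (A B : Set (Fin 2 → ℝ))
    (hA : IsLatticePolytope A) (hB : IsLatticePolytope B)
    (hAdim : (interior A).Nonempty) (hAsm : IsSmoothPolygon A)
    (href : FanRefines A B) :
    {x : Fin 2 → ℝ | x ∈ A + B ∧ IsLatticePt x} =
      {x : Fin 2 → ℝ | ∃ a b : Fin 2 → ℝ,
        a ∈ A ∧ IsLatticePt a ∧ b ∈ B ∧ IsLatticePt b ∧ x = a + b} := by
  exact stmt12_general A B hA hB href
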